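/- Let l ≥ 1 and let X = {A ∈ Mat_{2l×l}(ℂ) : AᵀJA = 0} be the set of 2l×l complex matrices with isotropic image. Then the subset {A ∈ X : rank A = l} of matrices of maximal rank is dense in X with respect to the standard topology on Mat_{2l×l}(ℂ). -/

import Mathlib

/-!
The image of `A` is isotropic, hence contained in a Lagrangian subspace `L`: a maximal isotropic
subspace equals its own orthogonal (`exists_isotropic_eq_orthogonal`), so it has dimension `l`
because the form is nondegenerate. If the columns of `M` are a basis of `L`, then `A = M * C` for
some square matrix `C`. Every matrix `M * (C + t • 1)` again has its image in `L`, and it has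
rank `l` unless `-t` is one of the finitely many eigenvalues of `C`; let `t → 0`.
-/

open Matrix

/-- The standard symplectic matrix `J = [[0, I],[−I, 0]]`. -/
def stdJ (l : ℕ) : Matrix (Fin l ⊕ Fin l) (Fin l ⊕ Fin l) ℂ :=
  Matrix.fromBlocks 0 1 (-1) 0

/-- For an alternating form on a finite-dimensional space, an isotropic subspace extends to one that
equals its orthogonal: a maximal isotropic subspace works, since adjoining a vector of the
orthogonal keeps it isotropic. -/
lemma exists_isotropic_eq_orthogonal {K V : Type*} [Field K] [AddCommGroup V] [Module K V]
    [FiniteDimensional K V] (B : LinearMap.BilinForm K V) (hB : B.IsAlt)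
    (W : Submodule K V) (hW : W ≤ B.orthogonal W) :
    ∃ L : Submodule K V, W ≤ L ∧ B.orthogonal L = L := by
  obtain ⟨L, hWL, hL⟩ := exists_maximal_ge_of_wellFoundedGT
    (fun S : Submodule K V => S ≤ B.orthogonal S) W hW
  refine ⟨L, hWL, le_antisymm (fun v hv => ?_) hL.prop⟩
  have hiso : L ⊔ K ∙ v ≤ B.orthogonal (L ⊔ K ∙ v) := by
    intro x hx y hy
    obtain ⟨a, ha, c, hc, rfl⟩ := Submodule.mem_sup.1 hx
    obtain ⟨b, hb, d, hd, rfl⟩ := Submodule.mem_sup.1 hy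
    obtain ⟨c, rfl⟩ := Submodule.mem_span_singleton.1 hc
    obtain ⟨d, rfl⟩ := Submodule.mem_span_singleton.1 hd
    have h1 : B b a = 0 := hL.prop ha b hb
    have h2 : B b v = 0 := hv b hb
    have h3 : B v a = 0 := hB.isRefl _ _ (hv a ha)
    have h4 : B v v = 0 := hB v
    change B (b + d • v) (a + c • v) = 0
    simp [h1, h2, h3, h4]
  exact hL.le_of_ge hiso le_sup_left
    (Submodule.mem_sup_right (Submodule.mem_span_singleton_self v))

lemma transpose_stdJ_apply {l : ℕ} (M N : Matrix (Fin l ⊕ Fin l) (Fin l) ℂ) (i j : Fin l) :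
    (Mᵀ * stdJ l * N) i j = Matrix.toBilin' (stdJ l) (M.col i) (N.col j) := by
  rw [Matrix.toBilin'_apply', Matrix.mul_assoc, Matrix.mul_apply']
  rfl

lemma stdJ_isAlt (l : ℕ) : (Matrix.toBilin' (stdJ l)).IsAlt := by
  intro x
  simp [Matrix.toBilin'_apply, stdJ, Matrix.one_apply, mul_comm]

lemma stdJ_nondegenerate (l : ℕ) : (Matrix.toBilin' (stdJ l)).Nondegenerate := by
  apply LinearMap.BilinForm.nondegenerate_toBilin'_of_det_ne_zero'
  have h : stdJ l * stdJ l = -1 := by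
    simp [stdJ, Matrix.fromBlocks_multiply, ← Matrix.fromBlocks_one, Matrix.fromBlocks_neg]
  intro h0
  have := congrArg Matrix.det h
  simp [Matrix.det_mul, h0, Matrix.det_neg] at this

/-- A matrix with isotropic image factors through a matrix whose columns are a basis of a
Lagrangian subspace. -/
lemma exists_lagrangian_factorization {l : ℕ} (A : Matrix (Fin l ⊕ Fin l) (Fin l) ℂ)
    (hA : Aᵀ * stdJ l * A = 0) :
    ∃ (M : Matrix (Fin l ⊕ Fin l) (Fin l) ℂ) (C : Matrix (Fin l) (Fin l) ℂ),
      Mᵀ * stdJ l * M = 0 ∧ M.rank = l ∧ A = M * C := by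
  have hW : Submodule.span ℂ (Set.range A.col) ≤
      (Matrix.toBilin' (stdJ l)).orthogonal (Submodule.span ℂ (Set.range A.col)) := by
    intro x hx y hy
    change Matrix.toBilin' (stdJ l) y x = 0
    induction hx, hy using Submodule.span_induction₂ with
    | mem_mem x y hx hy =>
      obtain ⟨i, rfl⟩ := hx
      obtain ⟨j, rfl⟩ := hy
      rw [← transpose_stdJ_apply, hA]
      rfl
    | zero_left => simp
    | zero_right => simp
    | add_left _ _ _ _ _ _ h1 h2 => simp [h1, h2]
    | add_right _ _ _ _ _ _ h1 h2 => simp [h1, h2]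
    | smul_left _ _ _ _ _ h => simp [h]
    | smul_right _ _ _ _ _ h => simp [h]
  obtain ⟨L, hWL, hL⟩ := exists_isotropic_eq_orthogonal _ (stdJ_isAlt l) _ hW
  have hdim : Module.finrank ℂ L = l := by
    have h := LinearMap.BilinForm.finrank_orthogonal (stdJ_nondegenerate l) L
    have hle := Submodule.finrank_le L
    rw [hL] at h
    simp at h hle
    omega
  let b : Module.Basis (Fin l) ℂ L := Module.finBasisOfFinrankEq ℂ L hdim
  have hmem : ∀ j, A.col j ∈ L := fun j => hWL (Submodule.subset_span ⟨j, rfl⟩)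
  refine ⟨Matrix.of fun i j => (b j : Fin l ⊕ Fin l → ℂ) i,
    Matrix.of fun i j => b.repr ⟨A.col j, hmem j⟩ i, ?_, ?_, ?_⟩
  · ext i j
    rw [transpose_stdJ_apply]
    have h : (b j : Fin l ⊕ Fin l → ℂ) ∈ (Matrix.toBilin' (stdJ l)).orthogonal L :=
      hL.symm ▸ (b j).2
    exact h _ (b i).2
  · rw [Matrix.rank_eq_finrank_span_cols]
    have : LinearIndependent ℂ (fun j => (b j : Fin l ⊕ Fin l → ℂ)) :=
      b.linearIndependent.map' L.subtype (Submodule.ker_subtype L)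
    exact (finrank_span_eq_card this).trans (Fintype.card_fin l)
  · ext i j
    have h := congrArg (fun v : L => (v : Fin l ⊕ Fin l → ℂ) i) (b.sum_repr ⟨A.col j, hmem j⟩)
    simp only [Submodule.coe_sum, Submodule.coe_smul, Finset.sum_apply, Pi.smul_apply,
      smul_eq_mul, Matrix.col_apply] at h
    simp only [Matrix.mul_apply, Matrix.of_apply, ← h, mul_comm]

/-- In the set `X` of `2l × l` complex matrices with isotropic image, the subset of
matrices of maximal rank `l` is dense for the standard topology: every point of `X`
lies in the closure of `{A ∈ X : rank A = l}`. -/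
theorem stmt_10 (l : ℕ) (hl : 1 ≤ l) (A : Matrix (Fin l ⊕ Fin l) (Fin l) ℂ)
    (hA : Aᵀ * stdJ l * A = 0) :
    A ∈ closure {B : Matrix (Fin l ⊕ Fin l) (Fin l) ℂ |
        Bᵀ * stdJ l * B = 0 ∧ B.rank = l} := by
  obtain ⟨M, C, hM, hr, rfl⟩ := exists_lagrangian_factorization A hA
  have hfin : {t : ℂ | (-C).charpoly.IsRoot t}.Finite :=
    Polynomial.finite_setOfPred_isRoot (Matrix.charpoly_monic _).ne_zero
  have hdense := hfin.countable.dense_compl ℂ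
  have hcont : Continuous fun t : ℂ => M * (Matrix.scalar (Fin l) t - -C) := by
    have : (fun t : ℂ => M * (Matrix.scalar (Fin l) t - -C)) = fun t => t • M + M * C := by
      ext t : 1
      simp [Matrix.mul_add, ← Matrix.smul_one_eq_diagonal]
    rw [this]
    fun_prop
  have key := map_mem_closure hcont (hdense 0)
    (t := {B : Matrix (Fin l ⊕ Fin l) (Fin l) ℂ | Bᵀ * stdJ l * B = 0 ∧ B.rank = l}) ?_
  · simpa using key
  · intro t ht
    have hdet : (Matrix.scalar (Fin l) t - -C).det ≠ 0 := by
      rw [← Matrix.eval_charpoly]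
      exact ht
    refine ⟨?_, ?_⟩
    · rw [Matrix.transpose_mul]
      calc _ = (Matrix.scalar (Fin l) t - -C)ᵀ * (Mᵀ * stdJ l * M)
            * (Matrix.scalar (Fin l) t - -C) := by simp only [Matrix.mul_assoc]
        _ = 0 := by rw [hM]; simp
    · rw [Matrix.rank_mul_eq_left_of_isUnit_det _ _ (isUnit_iff_ne_zero.2 hdet), hr]
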